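/- Let φ₁, φ₂, φ₃ : ℂ³ → ℝ be real-linear functionals (ℂ³ regarded as a real vector space by restriction of scalars), let T be the intersection of their kernels, and for each j define the complex-linear functional ψⱼ : ℂ³ → ℂ by ψⱼ(v) = φⱼ(v) − i·φⱼ(i•v). Then T contains a complex line (i.e., T ∩ iT ≠ 0, where iT is the image of T under v ↦ i•v) if and only if ψ₁, ψ₂, ψ₃ are linearly dependent over ℂ. -/

import Mathlib

/-!
A vector `v` lies in `T ⊓ iT` exactly when both `φⱼ v` and `φⱼ (i • v)` vanish for every `j`, that
is, when every `ψⱼ v` vanishes. Each `ψⱼ` is complex linear, so it is the dot product with the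
`j`-th row of the `3 × 3` complex matrix `M` with entries `ψⱼ (eₖ)`. Hence `T ⊓ iT` is the kernel
of `M`, which is nonzero iff `det M = 0`, iff the rows of `M`, equivalently the `ψⱼ`, are dependent.
-/

/-- The standard complex structure `J : v ↦ i • v` on `ℂⁿ` viewed as a real vector space. -/
noncomputable def J (n : ℕ) : (Fin n → ℂ) →ₗ[ℝ] (Fin n → ℂ) :=
  Complex.I • (LinearMap.id : (Fin n → ℂ) →ₗ[ℝ] (Fin n → ℂ))

/-- The complex-linear part `ψ(v) = φ(v) - i·φ(i•v)` of a real-linear functional `φ`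
on `ℂ³`. -/
noncomputable def clinPart (φ : (Fin 3 → ℂ) →ₗ[ℝ] ℝ) : (Fin 3 → ℂ) → ℂ :=
  fun v => (φ v : ℂ) - Complex.I * (φ (Complex.I • v) : ℂ)

theorem clinPart_eq_zero_iff (φ : (Fin 3 → ℂ) →ₗ[ℝ] ℝ) (v : Fin 3 → ℂ) :
    clinPart φ v = 0 ↔ φ v = 0 ∧ φ (Complex.I • v) = 0 := by
  simp [clinPart, Complex.ext_iff]

/-- Complex linearity of `ψ`, in coordinates: `ψ` is the dot product with the row `(ψ(eₖ))ₖ`. -/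
theorem clinPart_eq_dotProduct (φ : (Fin 3 → ℂ) →ₗ[ℝ] ℝ) (v : Fin 3 → ℂ) :
    clinPart φ v = (fun k => clinPart φ (Pi.single k 1)) ⬝ᵥ v := by
  have h (w : Fin 3 → ℂ) : clinPart φ w = Module.Dual.extendRCLike (𝕜 := ℂ) φ w := by
    simp [clinPart, Module.Dual.extendRCLike_apply]
  simp only [h]
  conv_lhs => rw [pi_eq_sum_univ' v]
  simp [dotProduct, mul_comm]

theorem mem_inf_map_J_iff (T : Submodule ℝ (Fin 3 → ℂ)) (v : Fin 3 → ℂ) :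
    v ∈ T ⊓ T.map (J 3) ↔ v ∈ T ∧ Complex.I • v ∈ T := by
  rw [Submodule.mem_inf, Submodule.mem_map]
  refine and_congr_right fun _ => ⟨?_, fun h => ⟨-(Complex.I • v), T.neg_mem h, ?_⟩⟩
  · rintro ⟨w, hw, rfl⟩
    simpa [J, smul_smul] using hw
  · simp [J, smul_smul]

/-- Functions given by dot products with the rows of a square matrix are independent iff the
matrix is nonsingular. -/
theorem linearIndependent_dotProduct_iff (M : Matrix (Fin 3) (Fin 3) ℂ) :
    LinearIndependent ℂ (fun j (v : Fin 3 → ℂ) => M j ⬝ᵥ v) ↔ M.det ≠ 0 := by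
  let L : (Fin 3 → ℂ) →ₗ[ℂ] ((Fin 3 → ℂ) → ℂ) :=
    { toFun := fun r v => r ⬝ᵥ v
      map_add' := fun r s => by ext v; simp [add_dotProduct]
      map_smul' := fun c r => by ext v; simp [smul_dotProduct] }
  have hL : LinearMap.ker L = ⊥ := by
    rw [LinearMap.ker_eq_bot']
    intro r hr
    exact dotProduct_eq_zero r fun w => congrFun hr w
  rw [← isUnit_iff_ne_zero, ← Matrix.isUnit_iff_isUnit_det,
    ← Matrix.linearIndependent_rows_iff_isUnit]
  exact L.linearIndependent_iff hL

/-- `T = ker φ₁ ∩ ker φ₂ ∩ ker φ₃` contains a complex line (`T ⊓ iT ≠ 0`) iff the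
complex-linear parts `ψ₁, ψ₂, ψ₃` are linearly dependent over `ℂ`. -/
theorem stmt_12 (φ₁ φ₂ φ₃ : (Fin 3 → ℂ) →ₗ[ℝ] ℝ)
    (T : Submodule ℝ (Fin 3 → ℂ))
    (hT : T = LinearMap.ker φ₁ ⊓ LinearMap.ker φ₂ ⊓ LinearMap.ker φ₃) :
    T ⊓ T.map (J 3) ≠ ⊥ ↔
      ¬ LinearIndependent ℂ ![clinPart φ₁, clinPart φ₂, clinPart φ₃] := by
  let φ : Fin 3 → (Fin 3 → ℂ) →ₗ[ℝ] ℝ := ![φ₁, φ₂, φ₃]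
  let M : Matrix (Fin 3) (Fin 3) ℂ := Matrix.of fun j k => clinPart (φ j) (Pi.single k 1)
  have hM (j : Fin 3) (v : Fin 3 → ℂ) : clinPart (φ j) v = M j ⬝ᵥ v :=
    clinPart_eq_dotProduct (φ j) v
  have hfam : ![clinPart φ₁, clinPart φ₂, clinPart φ₃] = fun j v => M j ⬝ᵥ v := by
    ext j v
    rw [← hM]
    fin_cases j <;> rfl
  have hmem (v : Fin 3 → ℂ) : v ∈ T ⊓ T.map (J 3) ↔ M.mulVec v = 0 := by
    have hv : M.mulVec v = 0 ↔ ∀ j, clinPart (φ j) v = 0 := by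
      simp only [hM, funext_iff]
      rfl
    rw [hv, mem_inf_map_J_iff, hT]
    simp only [clinPart_eq_zero_iff, Fin.forall_fin_succ, Submodule.mem_inf, LinearMap.mem_ker]
    simp [φ]
    tauto
  rw [hfam, linearIndependent_dotProduct_iff, not_not, ← Matrix.exists_mulVec_eq_zero_iff,
    Submodule.ne_bot_iff]
  simp only [hmem]
  exact exists_congr fun v => and_comm
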